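/- Let R be a Noetherian ring and let I be an ideal of R. Let y ∈ I \ I^2 be such that (0 : y) ∩ I = 0 and, for some p ≥ 2, the Valabrega–Valla module VV_{(y)}(I)_{p-1} = ((y) ∩ I^{p-1})/(yI^{p-2}) is zero. Then there is a short exact sequence of R-modules 0 → E(I)_p → E(I/(y))_p → ((y) ∩ I^p)/(yI^{p-1}) → 0, where I/(y) is the image ideal of I in R/(y). In particular, if the initial form y* is a gr_I(R)-regular element, then E(I)_p ≅ E(I/(y))_p for all p ≥ 2 and rt(I) = rt(I/(y)). -/

import Mathlib

set_option synthInstance.maxHeartbeats 1000000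
set_option maxHeartbeats 1000000

open scoped TensorProduct
open PiTensorProduct

section SymDefs

variable (R : Type*) [CommRing R]

/-- The `n`-fold tensor power of (the `R`-module underlying) the ideal `I`. -/
abbrev TensPow (I : Ideal R) (n : ℕ) : Type _ := ⨂[R] (_ : Fin n), ↥I

/-- The multilinear "product" map `(v₁,…,vₙ) ↦ v₁⋯vₙ : Iⁿ ⊆ R`. -/
noncomputable def prodML (I : Ideal R) (n : ℕ) :
    MultilinearMap R (fun _ : Fin n => ↥I) R :=
  (MultilinearMap.mkPiAlgebra R (Fin n) R).compLinearMap fun _ => I.subtype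

/-- The symmetrizer relations in the `n`-th tensor power of `I`. -/
noncomputable def symRel (I : Ideal R) (n : ℕ) : Submodule R (TensPow R I n) :=
  Submodule.span R {z | ∃ (v : Fin n → ↥I) (σ : Equiv.Perm (Fin n)),
    z = tprod R v - tprod R (v ∘ σ)}

/-- The `n`-th symmetric power `Symⁿ(I)` of the ideal `I`, i.e. the `n`-th graded
component of the symmetric algebra of the `R`-module `I`. -/
abbrev SymPow (I : Ideal R) (n : ℕ) : Type _ := TensPow R I n ⧸ symRel R I n

/-- The `n`-th component `α_{I,n} : Symₙ(I) → Iⁿ ⊆ R` of the canonical morphism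
`α_I : Sym(I) → R(I)` (composed with the inclusion `Iⁿ ⊆ R`; it is an isomorphism
onto `Iⁿ` iff it is injective as a map to `R`). -/
noncomputable def alphaCan (I : Ideal R) (n : ℕ) : SymPow R I n →ₗ[R] R :=
  Submodule.liftQ (symRel R I n) (PiTensorProduct.lift (prodML R I n)) (by
    rw [symRel, Submodule.span_le]
    rintro z ⟨v, σ, rfl⟩
    simp only [SetLike.mem_coe, LinearMap.mem_ker, map_sub, PiTensorProduct.lift.tprod]
    have : prodML R I n (v ∘ σ) = prodML R I n v := by
      simp only [prodML, MultilinearMap.compLinearMap_apply,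
        MultilinearMap.mkPiAlgebra_apply, Function.comp_apply]
      exact Equiv.prod_comp σ fun i => ((v i : R))
    rw [this, sub_self])

end SymDefs

section EDefs

variable (R : Type*) [CommRing R]

/-- "Multiplication by `x`" map on tensor powers: `w ↦ x ⊗ w`. -/
noncomputable def consMap (I : Ideal R) (n : ℕ) (x : ↥I) :
    TensPow R I n →ₗ[R] TensPow R I (n + 1) :=
  PiTensorProduct.lift
    ((PiTensorProduct.tprod R (s := fun _ : Fin (n + 1) => ↥I)).curryLeft x)

/-- The submodule `Sym₁(I)·ker(α_{I,n}) ⊆ Sym_{n+1}(I)`. -/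
noncomputable def symOneMulKer (I : Ideal R) (n : ℕ) : Submodule R (SymPow R I (n + 1)) :=
  Submodule.span R {z | ∃ (x : ↥I) (w : TensPow R I n),
    (Submodule.Quotient.mk w : SymPow R I n) ∈ LinearMap.ker (alphaCan R I n) ∧
    z = Submodule.Quotient.mk (consMap R I n x w)}

/-- The module of effective relations `E(I)_{n+1} = ker(α_{I,n+1})/Sym₁(I)·ker(α_{I,n})`. -/
abbrev EffRel (I : Ideal R) (n : ℕ) : Type _ :=
  LinearMap.ker (alphaCan R I (n + 1)) ⧸
    Submodule.comap (LinearMap.ker (alphaCan R I (n + 1))).subtype (symOneMulKer R I n)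

end EDefs

section GrDefs

variable {R : Type*} [CommRing R]

/-- The ideal `I·R(I)` of the Rees algebra `R(I) = R[It] ⊆ R[t]`. -/
noncomputable def grIdeal (I : Ideal R) : Ideal (reesAlgebra I) :=
  Ideal.span ((algebraMap R (reesAlgebra I)) '' (I : Set R))

/-- The associated graded ring `gr_I(R) = ⊕ₙ Iⁿ/Iⁿ⁺¹`, realized as `R(I)/I·R(I)`. -/
abbrev GrRing (I : Ideal R) := reesAlgebra I ⧸ grIdeal I

end GrDefs

section VVDefs

variable {R : Type*} [CommRing R]

/-- The ideal `(y) ∩ Iᵖ`. -/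
noncomputable def vvCap (y : R) (I : Ideal R) (p : ℕ) : Ideal R :=
  Ideal.span {y} ⊓ I ^ p

end VVDefs

/-!
Base change along `R → R/(y)` induces `Symₚ(I) → Symₚ(I/(y))`, whose kernel is `y · Symₚ₋₁(I)` and
hence is mapped by `α` onto `yIᵖ⁻¹`. If `VV_{(y)}(I)ₚ₋₁ = 0`, every element of `ker α_{I/(y),p-1}`
lifts to `ker α_{I,p-1}`, so the preimage of `Sym₁ · ker α_{I/(y),p-1}` in `Symₚ(I)` is
`Sym₁ · ker α_{I,p-1} + y · Symₚ₋₁(I)`. As `y` is a nonzerodivisor on `I`, an element `yu` of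
`ker α_{I,p}` has `u ∈ ker α_{I,p-1}`, which makes `E(I)ₚ → E(I/(y))ₚ` injective; its cokernel is
read off from `α`, which maps the preimage of `ker α_{I/(y),p}` onto `(y) ∩ Iᵖ`.
-/

section Multilinear

variable {R ι M M' N : Type*} [CommRing R] [AddCommGroup M] [Module R M] [AddCommGroup M']
  [Module R M'] [AddCommGroup N] [Module R N]

theorem multilinearMap_eq_of_comp_eq [Finite ι] {φ : MultilinearMap R (fun _ : ι => M) N}
    {q : M →ₗ[R] M'} (hφ : ∀ v i, q (v i) = 0 → φ v = 0) {v w : ι → M} (hvw : q ∘ v = q ∘ w) :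
    φ v = φ w := by
  classical
  cases nonempty_fintype ι
  have expansion : φ v = ∑ s : Finset ι, φ (s.piecewise w (v - w)) := by
    rw [← MultilinearMap.map_add_univ, add_sub_cancel]
  have mixed_terms_vanish (s : Finset ι) (hs : s ≠ Finset.univ) :
      φ (s.piecewise w (v - w)) = 0 := by
    obtain ⟨i, hi⟩ : ∃ i, i ∉ s := by simpa [Finset.eq_univ_iff_forall] using hs
    refine hφ _ i ?_
    simpa [hi, sub_eq_zero] using congrFun hvw i
  rw [expansion, Fintype.sum_eq_single Finset.univ mixed_terms_vanish, Finset.piecewise_univ]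

theorem exists_multilinearMap_comp_eq [Finite ι] {S : Type*} [CommRing S] [Algebra R S]
    [Module S M'] [IsScalarTower R S M'] [Module S N] [IsScalarTower R S N]
    (hS : Function.Surjective (algebraMap R S)) {φ : MultilinearMap R (fun _ : ι => M) N}
    {q : M →ₗ[R] M'} (hq : Function.Surjective q) (hφ : ∀ v i, q (v i) = 0 → φ v = 0) :
    ∃ ψ : MultilinearMap S (fun _ : ι => M') N, ∀ v : ι → M, ψ (q ∘ v) = φ v := by
  obtain ⟨s, hs⟩ := hq.hasRightInverse
  have comp_section (v : ι → M') : q ∘ s ∘ v = v := funext fun i => hs (v i)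
  refine ⟨⟨fun v => φ (s ∘ v), fun v i x y => ?_, fun v i c x => ?_⟩, fun v =>
    multilinearMap_eq_of_comp_eq hφ (comp_section _)⟩
  · simp only [Function.comp_update]
    rw [← φ.map_update_add]
    refine multilinearMap_eq_of_comp_eq hφ ?_
    simp [Function.comp_update, comp_section, hs _]
  · obtain ⟨r, rfl⟩ := hS c
    simp only [Function.comp_update]
    rw [algebraMap_smul, algebraMap_smul, ← φ.map_update_smul]
    refine multilinearMap_eq_of_comp_eq hφ ?_
    simp [Function.comp_update, hs _]

end Multilinear

namespace SymPow

variable {R : Type*} [CommRing R] {I : Ideal R} {n : ℕ} {M : Type*} [AddCommGroup M] [Module R M]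

/-- The symmetric product `(v₁, …, vₙ) ↦ v₁ ⋯ vₙ` of `n` elements of `I`, as an element of
`Symₙ(I)`. -/
noncomputable def tprod (I : Ideal R) (n : ℕ) :
    MultilinearMap R (fun _ : Fin n => I) (SymPow R I n) :=
  (symRel R I n).mkQ.compMultilinearMap (PiTensorProduct.tprod R)

theorem tprod_comp_perm (v : Fin n → I) (σ : Equiv.Perm (Fin n)) :
    tprod I n (v ∘ σ) = tprod I n v :=
  ((Submodule.Quotient.eq (symRel R I n)).2 (Submodule.subset_span ⟨v, σ, rfl⟩)).symm

theorem span_range_tprod (I : Ideal R) (n : ℕ) :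
    Submodule.span R (Set.range (tprod I n)) = ⊤ := by
  rw [tprod, LinearMap.coe_compMultilinearMap, Set.range_comp, Submodule.span_image,
    PiTensorProduct.span_tprod_eq_top, Submodule.map_top, Submodule.range_mkQ]

theorem hom_ext {f g : SymPow R I n →ₗ[R] M} (h : ∀ v, f (tprod I n v) = g (tprod I n v)) :
    f = g :=
  LinearMap.ext_on_range (span_range_tprod I n) h

/-- The linear map out of `Symₙ(I)` induced by a symmetric multilinear map. -/
noncomputable def lift (φ : MultilinearMap R (fun _ : Fin n => I) M)
    (hφ : ∀ v (σ : Equiv.Perm (Fin n)), φ (v ∘ σ) = φ v) : SymPow R I n →ₗ[R] M :=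
  (symRel R I n).liftQ (PiTensorProduct.lift φ) <| Submodule.span_le.2 <| by
    rintro _ ⟨v, σ, rfl⟩
    simp [hφ]

@[simp]
theorem lift_tprod (φ : MultilinearMap R (fun _ : Fin n => I) M)
    (hφ : ∀ v (σ : Equiv.Perm (Fin n)), φ (v ∘ σ) = φ v) (v : Fin n → I) :
    lift φ hφ (tprod I n v) = φ v :=
  PiTensorProduct.lift.tprod v

@[simp]
theorem alphaCan_tprod (v : Fin n → I) : alphaCan R I n (tprod I n v) = ∏ i, (v i : R) := by
  change PiTensorProduct.lift (prodML R I n) (PiTensorProduct.tprod R v) = _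
  simp [prodML]

open scoped Pointwise in
theorem range_alphaCan (I : Ideal R) (n : ℕ) : LinearMap.range (alphaCan R I n) = I ^ n := by
  have image_eq : alphaCan R I n '' Set.range (tprod I n) = (I : Set R) ^ n := by
    ext r
    simp [Set.mem_pow, List.prod_ofFn]
  rw [← Submodule.map_top, ← span_range_tprod, Submodule.map_span, image_eq,
    Submodule.pow_eq_span_pow_set]

theorem alphaCan_mem_pow (w : SymPow R I n) : alphaCan R I n w ∈ I ^ n :=
  range_alphaCan I n ▸ LinearMap.mem_range_self _ w

theorem tprod_cons_comp_perm (x : I) (v : Fin n → I) (σ : Equiv.Perm (Fin n)) :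
    tprod I (n + 1) (Fin.cons x (v ∘ σ)) = tprod I (n + 1) (Fin.cons x v) := by
  rw [← tprod_comp_perm (Fin.cons x v) (Equiv.Perm.decomposeFin.symm (0, σ))]
  congr 1
  ext i
  refine Fin.cases ?_ (fun j => ?_) i <;> simp

/-- The multiplication `Sym₁(I) × Symₙ(I) → Symₙ₊₁(I)`. -/
noncomputable def mulLeft (I : Ideal R) (n : ℕ) :
    I →ₗ[R] SymPow R I n →ₗ[R] SymPow R I (n + 1) where
  toFun x := lift ((tprod I (n + 1)).curryLeft x) fun v σ => by
    simpa using tprod_cons_comp_perm x v σ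
  map_add' x y := hom_ext fun v => by simp
  map_smul' r x := hom_ext fun v => by simp

@[simp]
theorem mulLeft_tprod (x : I) (v : Fin n → I) :
    mulLeft I n x (tprod I n v) = tprod I (n + 1) (Fin.cons x v) := by
  simp [mulLeft]

theorem mk_consMap (x : I) (w : TensPow R I n) :
    (Submodule.Quotient.mk (consMap R I n x w) : SymPow R I (n + 1)) =
      mulLeft I n x (Submodule.Quotient.mk w) := by
  have h : (symRel R I (n + 1)).mkQ ∘ₗ consMap R I n x = mulLeft I n x ∘ₗ (symRel R I n).mkQ :=
    PiTensorProduct.ext <| MultilinearMap.ext fun v =>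
      (congrArg (symRel R I (n + 1)).mkQ (PiTensorProduct.lift.tprod v)).trans
        (mulLeft_tprod x v).symm
  exact LinearMap.congr_fun h w

theorem alphaCan_mulLeft (x : I) (w : SymPow R I n) :
    alphaCan R I (n + 1) (mulLeft I n x w) = x * alphaCan R I n w := by
  have h : alphaCan R I (n + 1) ∘ₗ mulLeft I n x = (x : R) • alphaCan R I n :=
    hom_ext fun v => by simp [Fin.prod_univ_succ]
  exact LinearMap.congr_fun h w

theorem symOneMulKer_eq_map₂ (I : Ideal R) (n : ℕ) :
    symOneMulKer R I n = Submodule.map₂ (mulLeft I n) ⊤ (LinearMap.ker (alphaCan R I n)) := by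
  rw [symOneMulKer, Submodule.map₂_eq_span_image2]
  congr 1
  ext z
  constructor
  · rintro ⟨x, w, hw, rfl⟩
    exact ⟨x, Submodule.mem_top, _, hw, (mk_consMap x w).symm⟩
  · rintro ⟨x, -, w, hw, rfl⟩
    obtain ⟨w, rfl⟩ := Submodule.mkQ_surjective _ w
    exact ⟨x, w, hw, (mk_consMap x w).symm⟩

theorem symOneMulKer_le_ker (I : Ideal R) (n : ℕ) :
    symOneMulKer R I n ≤ LinearMap.ker (alphaCan R I (n + 1)) := by
  rw [symOneMulKer_eq_map₂, Submodule.map₂_le]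
  intro x _ w hw
  rw [LinearMap.mem_ker, alphaCan_mulLeft, LinearMap.mem_ker.1 hw, mul_zero]

section BaseChange

variable (S : Type*) [CommRing S] [Algebra R S]

/-- The map `Symₙ(I) → Symₙ(IS)` induced by `I → IS`. -/
noncomputable def map (I : Ideal R) (n : ℕ) :
    SymPow R I n →ₗ[R] SymPow S (I.map (algebraMap R S)) n :=
  lift (((tprod (I.map (algebraMap R S)) n).restrictScalars R).compLinearMap
    fun _ => Algebra.idealMap S I) fun v σ =>
    tprod_comp_perm (fun i => Algebra.idealMap S I (v i)) σ

@[simp]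
theorem map_tprod (v : Fin n → I) :
    map S I n (tprod I n v) = tprod _ n fun i => Algebra.idealMap S I (v i) :=
  lift_tprod _ _ v

theorem alphaCan_map (w : SymPow R I n) :
    alphaCan S (I.map (algebraMap R S)) n (map S I n w) = algebraMap R S (alphaCan R I n w) := by
  have h : (alphaCan S (I.map (algebraMap R S)) n).restrictScalars R ∘ₗ map S I n =
      Algebra.linearMap R S ∘ₗ alphaCan R I n := hom_ext fun v => by simp
  exact LinearMap.congr_fun h w

theorem map_mulLeft (x : I) (w : SymPow R I n) :
    map S I (n + 1) (mulLeft I n x w) =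
      mulLeft _ n (Algebra.idealMap S I x) (map S I n w) := by
  have h : map S I (n + 1) ∘ₗ mulLeft I n x =
      (mulLeft _ n (Algebra.idealMap S I x)).restrictScalars R ∘ₗ map S I n := hom_ext fun v => by
    have cons_comp : (fun i => Algebra.idealMap S I ((Fin.cons x v : Fin (n + 1) → I) i)) =
        Fin.cons (Algebra.idealMap S I x) fun i => Algebra.idealMap S I (v i) :=
      funext <| Fin.cases rfl fun _ => rfl
    simp [cons_comp]
  exact LinearMap.congr_fun h w

theorem symOneMulKer_le_comap_map (I : Ideal R) (n : ℕ) :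
    symOneMulKer R I n ≤
      ((symOneMulKer S (I.map (algebraMap R S)) n).restrictScalars R).comap (map S I (n + 1)) := by
  rw [symOneMulKer_eq_map₂, symOneMulKer_eq_map₂, Submodule.map₂_le]
  intro x _ w hw
  rw [Submodule.mem_comap, map_mulLeft]
  refine Submodule.apply_mem_map₂ _ Submodule.mem_top ?_
  rw [LinearMap.mem_ker, alphaCan_map, LinearMap.mem_ker.1 hw, map_zero]

variable {S}

theorem idealMap_surjective (hS : Function.Surjective (algebraMap R S)) (I : Ideal R) :
    Function.Surjective (Algebra.idealMap S I) := by
  rintro ⟨z, hz⟩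
  obtain ⟨x, hx, rfl⟩ := (Ideal.mem_map_iff_of_surjective _ hS).1 hz
  exact ⟨⟨x, hx⟩, rfl⟩

theorem map_surjective (hS : Function.Surjective (algebraMap R S)) (I : Ideal R) (n : ℕ) :
    Function.Surjective (map S I n) := by
  rw [← LinearMap.range_eq_top, eq_top_iff, ← Submodule.restrictScalars_top R S,
    ← span_range_tprod, Submodule.restrictScalars_span R S hS, Submodule.span_le]
  rintro _ ⟨v, rfl⟩
  choose u hu using fun i => idealMap_surjective hS I (v i)
  exact ⟨tprod I n u, by simp [hu]⟩

end BaseChange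

section Quotient

variable {𝔞 : Ideal R}

theorem tprod_mem_map₂_mulLeft {v : Fin (n + 1) → I} {i : Fin (n + 1)}
    (hi : (v i : R) ∈ 𝔞) :
    tprod I (n + 1) v ∈ Submodule.map₂ (mulLeft I n) (Submodule.comap I.subtype 𝔞) ⊤ := by
  have factor_out : tprod I (n + 1) v =
      mulLeft I n (v i) (tprod I n (Fin.tail (v ∘ Equiv.swap 0 i))) := by
    have cons_eq : Fin.cons (v i) (Fin.tail (v ∘ Equiv.swap 0 i)) = v ∘ Equiv.swap 0 i := by
      simpa using Fin.cons_self_tail (v ∘ Equiv.swap 0 i)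
    rw [mulLeft_tprod, cons_eq, tprod_comp_perm]
  rw [factor_out]
  exact Submodule.apply_mem_map₂ _ hi Submodule.mem_top

theorem smul_mem_map₂_mulLeft {a : R} (ha : a ∈ 𝔞) (w : SymPow R I (n + 1)) :
    a • w ∈ Submodule.map₂ (mulLeft I n) (Submodule.comap I.subtype 𝔞) ⊤ := by
  suffices h : ⊤ ≤ (Submodule.map₂ (mulLeft I n) (Submodule.comap I.subtype 𝔞) ⊤).comap
      (LinearMap.lsmul R _ a) from h Submodule.mem_top
  rw [← span_range_tprod, Submodule.span_le]
  rintro _ ⟨v, rfl⟩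
  have smul_tprod : a • tprod I (n + 1) v = tprod I (n + 1) (Function.update v 0 (a • v 0)) := by
    rw [MultilinearMap.map_update_smul, Function.update_eq_self]
  rw [SetLike.mem_coe, Submodule.mem_comap, LinearMap.lsmul_apply, smul_tprod]
  exact tprod_mem_map₂_mulLeft (i := 0) (by simpa using 𝔞.mul_mem_right _ ha)

theorem ker_map_quotient (𝔞 I : Ideal R) (n : ℕ) :
    LinearMap.ker (map (R ⧸ 𝔞) I (n + 1)) =
      Submodule.map₂ (mulLeft I n) (Submodule.comap I.subtype 𝔞) ⊤ := by
  set N := Submodule.map₂ (mulLeft I n) (Submodule.comap I.subtype 𝔞) ⊤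
  have idealMap_eq_zero (x : I) : Algebra.idealMap (R ⧸ 𝔞) I x = 0 ↔ (x : R) ∈ 𝔞 := by
    rw [← Ideal.Quotient.eq_zero_iff_mem, ← ZeroMemClass.coe_eq_zero]
    rfl
  refine le_antisymm ?_ (Submodule.map₂_le.2 fun x hx w _ => ?_)
  -- The product `tprod` descends to an `R/𝔞`-multilinear map into `Symₙ₊₁(I)/N`, so that the
  -- projection onto `Symₙ₊₁(I)/N` factors through `map`.
  · have torsion : Module.IsTorsionBySet R (SymPow R I (n + 1) ⧸ N) 𝔞 := by
      rintro ⟨w⟩ ⟨a, ha⟩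
      exact (Submodule.Quotient.mk_eq_zero N).2 (smul_mem_map₂_mulLeft ha w)
    let : Module (R ⧸ 𝔞) (SymPow R I (n + 1) ⧸ N) := torsion.module
    have : IsScalarTower R (R ⧸ 𝔞) (SymPow R I (n + 1) ⧸ N) := torsion.isScalarTower
    have surj := idealMap_surjective (S := R ⧸ 𝔞) Ideal.Quotient.mk_surjective I
    obtain ⟨ψ, hψ⟩ := exists_multilinearMap_comp_eq (S := R ⧸ 𝔞) Ideal.Quotient.mk_surjective
      (φ := N.mkQ.compMultilinearMap (tprod I (n + 1))) surj fun v i hi =>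
        (Submodule.Quotient.mk_eq_zero N).2
          (tprod_mem_map₂_mulLeft ((idealMap_eq_zero _).1 hi))
    have symm (v) (σ : Equiv.Perm (Fin (n + 1))) : ψ (v ∘ σ) = ψ v := by
      obtain ⟨u, rfl⟩ := surj.comp_left v
      rw [Function.comp_assoc, hψ, hψ, LinearMap.compMultilinearMap_apply, tprod_comp_perm,
        LinearMap.compMultilinearMap_apply]
    have lift_comp_map : (lift ψ symm).restrictScalars R ∘ₗ map (R ⧸ 𝔞) I (n + 1) = N.mkQ :=
      hom_ext fun v => by
        rw [LinearMap.comp_apply, LinearMap.restrictScalars_apply, map_tprod, lift_tprod]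
        exact hψ v
    rw [← N.ker_mkQ, ← lift_comp_map]
    exact LinearMap.ker_le_ker_comp _ _
  · rw [LinearMap.mem_ker, map_mulLeft, (idealMap_eq_zero x).2 hx, map_zero, LinearMap.zero_apply]

theorem ker_map_quotient_span_singleton (y : I) (n : ℕ) :
    LinearMap.ker (map (R ⧸ Ideal.span {(y : R)}) I (n + 1)) = LinearMap.range (mulLeft I n y) := by
  have comap_span : Submodule.comap I.subtype (Ideal.span {(y : R)}) = Submodule.span R {y} := by
    rw [← Submodule.comap_map_eq_of_injective I.injective_subtype (Submodule.span R {y}),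
      Submodule.map_span, Set.image_singleton]
    rfl
  rw [ker_map_quotient, comap_span, Submodule.map₂_span_singleton_eq_map, LinearMap.range_eq_map]

theorem map_alphaCan_ker_map_quotient (h𝔞 : 𝔞 ≤ I) (n : ℕ) :
    (LinearMap.ker (map (R ⧸ 𝔞) I (n + 1))).map (alphaCan R I (n + 1)) = 𝔞 * I ^ n := by
  rw [ker_map_quotient]
  apply le_antisymm
  · rw [Submodule.map_le_iff_le_comap, Submodule.map₂_le]
    intro x hx w _
    rw [Submodule.mem_comap, alphaCan_mulLeft]
    exact Ideal.mul_mem_mul hx (alphaCan_mem_pow w)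
  · rw [Ideal.mul_le]
    intro a ha r hr
    obtain ⟨w, rfl⟩ := (range_alphaCan I n).ge hr
    exact ⟨mulLeft I n ⟨a, h𝔞 ha⟩ w, Submodule.apply_mem_map₂ _ ha Submodule.mem_top,
      alphaCan_mulLeft _ _⟩

theorem ker_alphaCan_quotient_le_map (h𝔞 : 𝔞 ≤ I) (hVV : 𝔞 ⊓ I ^ (n + 1) ≤ 𝔞 * I ^ n) :
    (LinearMap.ker (alphaCan _ (I.map (algebraMap R (R ⧸ 𝔞))) (n + 1))).restrictScalars R ≤
      (LinearMap.ker (alphaCan R I (n + 1))).map (map (R ⧸ 𝔞) I (n + 1)) := by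
  intro w' hw'
  obtain ⟨w, rfl⟩ := map_surjective Ideal.Quotient.mk_surjective I (n + 1) w'
  have alpha_mem_𝔞 : alphaCan R I (n + 1) w ∈ 𝔞 :=
    Ideal.Quotient.eq_zero_iff_mem.1 ((alphaCan_map _ w).symm.trans hw')
  have alpha_mem := hVV ⟨alpha_mem_𝔞, alphaCan_mem_pow w⟩
  rw [← map_alphaCan_ker_map_quotient h𝔞] at alpha_mem
  obtain ⟨u, hu, alpha_u⟩ := alpha_mem
  refine ⟨w - u, ?_, ?_⟩
  · rw [SetLike.mem_coe, LinearMap.mem_ker, map_sub, alpha_u, sub_self]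
  · rw [map_sub, LinearMap.mem_ker.1 hu, sub_zero]

theorem symOneMulKer_quotient_le_map (h𝔞 : 𝔞 ≤ I) (hVV : 𝔞 ⊓ I ^ (n + 1) ≤ 𝔞 * I ^ n) :
    (symOneMulKer _ (I.map (algebraMap R (R ⧸ 𝔞))) (n + 1)).restrictScalars R ≤
      (symOneMulKer R I (n + 1)).map (map (R ⧸ 𝔞) I (n + 2)) := by
  have hS : Function.Surjective (algebraMap R (R ⧸ 𝔞)) := Ideal.Quotient.mk_surjective
  rw [symOneMulKer_eq_map₂, symOneMulKer_eq_map₂, Submodule.map₂_eq_span_image2,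
    Submodule.restrictScalars_span R (R ⧸ 𝔞) hS, Submodule.span_le]
  rintro _ ⟨x', -, w', hw', rfl⟩
  obtain ⟨x, rfl⟩ := idealMap_surjective hS I x'
  obtain ⟨w, hw, rfl⟩ := ker_alphaCan_quotient_le_map h𝔞 hVV hw'
  exact ⟨_, Submodule.apply_mem_map₂ _ Submodule.mem_top hw, map_mulLeft (R ⧸ 𝔞) x w⟩

theorem comap_symOneMulKer_quotient (h𝔞 : 𝔞 ≤ I) (hVV : 𝔞 ⊓ I ^ (n + 1) ≤ 𝔞 * I ^ n) :
    ((symOneMulKer _ (I.map (algebraMap R (R ⧸ 𝔞))) (n + 1)).restrictScalars R).comap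
        (map (R ⧸ 𝔞) I (n + 2)) =
      symOneMulKer R I (n + 1) ⊔ LinearMap.ker (map (R ⧸ 𝔞) I (n + 2)) := by
  rw [← Submodule.comap_map_eq]
  exact le_antisymm (Submodule.comap_mono (symOneMulKer_quotient_le_map h𝔞 hVV))
    (Submodule.comap_mono (Submodule.map_le_iff_le_comap.2 (symOneMulKer_le_comap_map _ I _)))

theorem symOneMulKer_sup_ker_inf_ker_le {y : R} (hy : y ∈ I) (hann : ∀ r ∈ I, y * r = 0 → r = 0)
    (n : ℕ) :
    (symOneMulKer R I (n + 1) ⊔ LinearMap.ker (map (R ⧸ Ideal.span {y}) I (n + 2))) ⊓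
      LinearMap.ker (alphaCan R I (n + 2)) ≤ symOneMulKer R I (n + 1) := by
  rw [ker_map_quotient_span_singleton ⟨y, hy⟩, sup_inf_assoc_of_le _ (symOneMulKer_le_ker I _)]
  refine sup_le le_rfl ?_
  rintro _ ⟨⟨u, rfl⟩, hu⟩
  have alpha_u : alphaCan R I (n + 1) u = 0 :=
    hann _ (Ideal.pow_le_self n.succ_ne_zero (alphaCan_mem_pow u))
      ((alphaCan_mulLeft _ u).symm.trans hu)
  rw [symOneMulKer_eq_map₂]
  exact Submodule.apply_mem_map₂ _ Submodule.mem_top alpha_u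

end Quotient

end SymPow

theorem eq_zero_of_mul_eq_zero_of_colon_inf_eq_bot {R : Type*} [CommRing R] {I : Ideal R} {y : R}
    (hann : (⊥ : Ideal R).colon (Ideal.span {y}) ⊓ I = ⊥) {r : R} (hr : r ∈ I) (hyr : y * r = 0) :
    r = 0 :=
  (Submodule.mem_bot R).1 <| hann.le
    ⟨Submodule.mem_colon_span_singleton.2 (by simpa [mul_comm r] using hyr), hr⟩

theorem exists_surjective_exact_of_ker_eq_comap_range {R L E E' V : Type*} [Ring R]
    [AddCommGroup L] [Module R L] [AddCommGroup E] [Module R E] [AddCommGroup E'] [Module R E']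
    [AddCommGroup V] [Module R V] {f : E →ₗ[R] E'} {b : L →ₗ[R] E'} {a : L →ₗ[R] V}
    (hb : Function.Surjective b) (ha : Function.Surjective a)
    (hker : LinearMap.ker a = (LinearMap.range f).comap b) :
    ∃ g : E' →ₗ[R] V, Function.Surjective g ∧ Function.Exact f g := by
  have ker_le : LinearMap.ker b ≤ LinearMap.ker a := fun l hl => by
    rw [hker, Submodule.mem_comap, LinearMap.mem_ker.1 hl]
    exact zero_mem _
  let g := (LinearMap.ker b).liftQ a ker_le ∘ₗ (b.quotKerEquivOfSurjective hb).symm.toLinearMap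
  have g_apply (l : L) : g (b l) = a l := by
    simp [g, LinearMap.quotKerEquivOfSurjective_symm_apply]
  refine ⟨g, fun v => (ha v).imp' b fun l hl => (g_apply l).trans hl, fun z => ?_⟩
  obtain ⟨l, rfl⟩ := hb z
  rw [g_apply, ← LinearMap.mem_ker, hker, Submodule.mem_comap, LinearMap.mem_range, Set.mem_range]

theorem compHom_quotientMk_eq {R M : Type*} [CommRing R] {𝔞 : Ideal R} [AddCommGroup M]
    [inst : Module R M] [Module (R ⧸ 𝔞) M] [IsScalarTower R (R ⧸ 𝔞) M] :
    Module.compHom M (Ideal.Quotient.mk 𝔞) = inst :=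
  Module.ext' _ _ fun r m => algebraMap_smul (R ⧸ 𝔞) r m

namespace EffRel

open SymPow

section BaseChange

variable {R : Type*} [CommRing R] (S : Type*) [CommRing S] [Algebra R S] (I : Ideal R) (n : ℕ)

/-- The relations of `I` over `S`: the elements of `Symₙ₊₁(I)` which `α_I` sends to zero in `S`. -/
noncomputable def kerOver : Submodule R (SymPow R I (n + 1)) :=
  LinearMap.ker (Algebra.linearMap R S ∘ₗ alphaCan R I (n + 1))

variable {S I n} in
theorem map_mem_ker_alphaCan_iff {w : SymPow R I (n + 1)} :
    SymPow.map S I (n + 1) w ∈ LinearMap.ker (alphaCan S (I.map (algebraMap R S)) (n + 1)) ↔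
      w ∈ kerOver S I n := by
  rw [LinearMap.mem_ker, alphaCan_map]
  rfl

/-- The map sending a relation of `I` over `S` to its class in `E(IS)ₙ₊₁`. -/
noncomputable def ofKerOver : kerOver S I n →ₗ[R] EffRel S (I.map (algebraMap R S)) n where
  toFun w := Submodule.Quotient.mk ⟨SymPow.map S I (n + 1) w, map_mem_ker_alphaCan_iff.2 w.2⟩
  map_add' v w := by
    rw [← Submodule.Quotient.mk_add]
    congr
    simp
  map_smul' r w := by
    rw [RingHom.id_apply, ← Submodule.Quotient.mk_smul]
    congr
    simp

variable {S I n} in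
theorem ofKerOver_eq_zero_iff {w : kerOver S I n} :
    ofKerOver S I n w = 0 ↔
      SymPow.map S I (n + 1) w ∈ symOneMulKer S (I.map (algebraMap R S)) n :=
  Submodule.Quotient.mk_eq_zero _

variable {S} in
theorem ofKerOver_surjective (hS : Function.Surjective (algebraMap R S)) :
    Function.Surjective (ofKerOver S I n) := by
  rintro ⟨w', hw'⟩
  obtain ⟨w, rfl⟩ := map_surjective hS I (n + 1) w'
  exact ⟨⟨w, map_mem_ker_alphaCan_iff.1 hw'⟩, rfl⟩

theorem ker_alphaCan_le_kerOver : LinearMap.ker (alphaCan R I (n + 1)) ≤ kerOver S I n :=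
  LinearMap.ker_le_ker_comp _ _

/-- The canonical map `E(I)ₙ₊₁ → E(IS)ₙ₊₁`. -/
noncomputable def map : EffRel R I n →ₗ[R] EffRel S (I.map (algebraMap R S)) n :=
  Submodule.liftQ _ (ofKerOver S I n ∘ₗ Submodule.inclusion (ker_alphaCan_le_kerOver S I n))
    fun _ hw => ofKerOver_eq_zero_iff.2 (symOneMulKer_le_comap_map S I n hw)

theorem map_mk (w : LinearMap.ker (alphaCan R I (n + 1))) :
    map S I n (Submodule.Quotient.mk w) =
      ofKerOver S I n (Submodule.inclusion (ker_alphaCan_le_kerOver S I n) w) :=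
  rfl

end BaseChange

section Quotient

variable {R : Type*} [CommRing R] {I 𝔞 : Ideal R} {n : ℕ}

theorem map_quotient_span_singleton_injective {y : R} (hy : y ∈ I)
    (hann : ∀ r ∈ I, y * r = 0 → r = 0)
    (hVV : Ideal.span {y} ⊓ I ^ (n + 1) ≤ Ideal.span {y} * I ^ n) :
    Function.Injective (map (R ⧸ Ideal.span {y}) I (n + 1)) := by
  refine (injective_iff_map_eq_zero _).2 fun z hz => ?_
  obtain ⟨w, rfl⟩ := Submodule.Quotient.mk_surjective _ z
  rw [map_mk, ofKerOver_eq_zero_iff] at hz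
  refine (Submodule.Quotient.mk_eq_zero _).2 (symOneMulKer_sup_ker_inf_ker_le hy hann n ⟨?_, w.2⟩)
  exact (comap_symOneMulKer_quotient ((Ideal.span_singleton_le_iff_mem I).2 hy) hVV).le hz

theorem ofKerOver_mem_range_map_iff (h𝔞 : 𝔞 ≤ I) (hVV : 𝔞 ⊓ I ^ (n + 1) ≤ 𝔞 * I ^ n)
    {w : kerOver (R ⧸ 𝔞) I (n + 1)} :
    ofKerOver (R ⧸ 𝔞) I (n + 1) w ∈ LinearMap.range (map (R ⧸ 𝔞) I (n + 1)) ↔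
      alphaCan R I (n + 2) w ∈ 𝔞 * I ^ (n + 1) := by
  rw [← map_alphaCan_ker_map_quotient h𝔞]
  constructor
  · rintro ⟨z, hz⟩
    obtain ⟨k, rfl⟩ := Submodule.Quotient.mk_surjective _ z
    rw [map_mk, eq_comm, ← sub_eq_zero, ← map_sub, ofKerOver_eq_zero_iff] at hz
    obtain ⟨d, hd, u, hu, hdu⟩ :=
      Submodule.mem_sup.1 ((comap_symOneMulKer_quotient h𝔞 hVV).le hz)
    refine ⟨u, hu, ?_⟩
    have alpha_add := congrArg (alphaCan R I (n + 2)) hdu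
    rwa [map_add, LinearMap.mem_ker.1 (symOneMulKer_le_ker I _ hd), zero_add, Submodule.coe_sub,
      map_sub, Submodule.coe_inclusion, LinearMap.mem_ker.1 k.2, sub_zero] at alpha_add
  · rintro ⟨u, hu, alpha_u⟩
    have sub_mem_ker : (w - u : SymPow R I (n + 2)) ∈ LinearMap.ker (alphaCan R I (n + 2)) := by
      rw [LinearMap.mem_ker, map_sub, alpha_u, sub_self]
    refine ⟨Submodule.Quotient.mk ⟨_, sub_mem_ker⟩, ?_⟩
    rw [map_mk, ← sub_eq_zero, ← map_sub, ofKerOver_eq_zero_iff]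
    simp [LinearMap.mem_ker.1 hu]

/-- The map `w ↦ α_I(w)` from relations of `I` over `R/𝔞` to the Valabrega–Valla module
`(𝔞 ∩ Iⁿ⁺¹)/𝔞Iⁿ`. -/
noncomputable def toVV (𝔞 I : Ideal R) (n : ℕ) :
    kerOver (R ⧸ 𝔞) I n →ₗ[R]
      ((𝔞 ⊓ I ^ (n + 1) : Ideal R) ⧸ Submodule.comap (𝔞 ⊓ I ^ (n + 1)).subtype (𝔞 * I ^ n)) :=
  Submodule.mkQ _ ∘ₗ (alphaCan R I (n + 1) ∘ₗ (kerOver (R ⧸ 𝔞) I n).subtype).codRestrict _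
    fun w => ⟨Ideal.Quotient.eq_zero_iff_mem.1 w.2, alphaCan_mem_pow _⟩

theorem toVV_eq_zero_iff {w : kerOver (R ⧸ 𝔞) I n} :
    toVV 𝔞 I n w = 0 ↔ alphaCan R I (n + 1) w ∈ 𝔞 * I ^ n :=
  Submodule.Quotient.mk_eq_zero _

theorem toVV_surjective (𝔞 I : Ideal R) (n : ℕ) : Function.Surjective (toVV 𝔞 I n) := by
  rintro ⟨r, hr𝔞, hrI⟩
  obtain ⟨w, rfl⟩ := (range_alphaCan I (n + 1)).ge hrI
  exact ⟨⟨w, Ideal.Quotient.eq_zero_iff_mem.2 hr𝔞⟩, rfl⟩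

theorem exists_exact_map_quotient (h𝔞 : 𝔞 ≤ I) (hVV : 𝔞 ⊓ I ^ (n + 1) ≤ 𝔞 * I ^ n) :
    ∃ g : EffRel (R ⧸ 𝔞) (I.map (algebraMap R (R ⧸ 𝔞))) (n + 1) →ₗ[R]
        ((𝔞 ⊓ I ^ (n + 2) : Ideal R) ⧸
          Submodule.comap (𝔞 ⊓ I ^ (n + 2)).subtype (𝔞 * I ^ (n + 1))),
      Function.Surjective g ∧ Function.Exact (map (R ⧸ 𝔞) I (n + 1)) g :=
  exists_surjective_exact_of_ker_eq_comap_range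
    (ofKerOver_surjective I (n + 1) Ideal.Quotient.mk_surjective)
    (toVV_surjective 𝔞 I (n + 1)) <| by
    ext w
    rw [LinearMap.mem_ker, Submodule.mem_comap, toVV_eq_zero_iff,
      ofKerOver_mem_range_map_iff h𝔞 hVV]

theorem map_quotient_surjective (h𝔞 : 𝔞 ≤ I) (hVV : 𝔞 ⊓ I ^ (n + 1) ≤ 𝔞 * I ^ n)
    (hVV' : 𝔞 ⊓ I ^ (n + 2) ≤ 𝔞 * I ^ (n + 1)) :
    Function.Surjective (map (R ⧸ 𝔞) I (n + 1)) := by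
  intro z
  obtain ⟨w, rfl⟩ := ofKerOver_surjective I (n + 1) Ideal.Quotient.mk_surjective z
  rw [← LinearMap.mem_range, ofKerOver_mem_range_map_iff h𝔞 hVV]
  exact hVV' ⟨Ideal.Quotient.eq_zero_iff_mem.1 w.2, alphaCan_mem_pow _⟩

theorem nonempty_linearEquiv_quotient_span_singleton {y : R} (hy : y ∈ I)
    (hann : ∀ r ∈ I, y * r = 0 → r = 0)
    (hVV : Ideal.span {y} ⊓ I ^ (n + 1) ≤ Ideal.span {y} * I ^ n)
    (hVV' : Ideal.span {y} ⊓ I ^ (n + 2) ≤ Ideal.span {y} * I ^ (n + 1)) :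
    Nonempty (EffRel R I (n + 1) ≃ₗ[R]
      EffRel _ (I.map (algebraMap R (R ⧸ Ideal.span {y}))) (n + 1)) :=
  ⟨.ofBijective (map _ I (n + 1)) ⟨map_quotient_span_singleton_injective hy hann hVV,
    map_quotient_surjective ((Ideal.span_singleton_le_iff_mem I).2 hy) hVV hVV'⟩⟩

end Quotient

end EffRel

section AssociatedGraded

open Polynomial

variable {R : Type*} [CommRing R] {I : Ideal R}

theorem coeff_mem_pow_succ_of_mem_grIdeal {f : reesAlgebra I} (hf : f ∈ grIdeal I) (k : ℕ) :
    (f : R[X]).coeff k ∈ I ^ (k + 1) := by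
  induction hf using Submodule.span_induction generalizing k with
  | mem f hf =>
    obtain ⟨r, hr, rfl⟩ := hf
    change (C r).coeff k ∈ _
    rw [coeff_C]
    split_ifs with hk
    · simpa [hk] using hr
    · exact zero_mem _
  | zero => exact zero_mem _
  | add f g _ _ hf hg => simpa using add_mem (hf k) (hg k)
  | smul g f _ hf =>
    change ((g : R[X]) * (f : R[X])).coeff k ∈ _
    rw [coeff_mul]
    refine sum_mem fun ij hij => ?_
    have coeff_mul_mem := Ideal.mul_mem_mul ((mem_reesAlgebra_iff I _).1 g.2 ij.1) (hf ij.2)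
    rwa [← pow_add, ← add_assoc, Finset.HasAntidiagonal.mem_antidiagonal.1 hij] at coeff_mul_mem

theorem exists_mem_grIdeal_coe_eq_monomial {k : ℕ} {r : R} (hr : r ∈ I ^ (k + 1)) :
    ∃ f ∈ grIdeal I, (f : R[X]) = monomial k r := by
  rw [pow_succ'] at hr
  induction hr using Submodule.mul_induction_on' with
  | mem_mul_mem a ha b hb =>
    refine ⟨algebraMap R (reesAlgebra I) a * ⟨monomial k b, reesAlgebra.monomial_mem.2 hb⟩,
      Ideal.mul_mem_right _ _ (Ideal.subset_span ⟨a, ha, rfl⟩), ?_⟩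
    change C a * monomial k b = _
    rw [C_mul_monomial]
  | add a _ b _ iha ihb =>
    obtain ⟨f, hf, coe_f⟩ := iha
    obtain ⟨g, hg, coe_g⟩ := ihb
    exact ⟨f + g, add_mem hf hg, by simp [coe_f, coe_g]⟩

variable {y : R} {ξ : reesAlgebra I}

theorem mem_pow_of_mul_mem_pow_succ (hξ : (ξ : R[X]) = C y * X)
    (hreg : ∀ z : GrRing I, Ideal.Quotient.mk (grIdeal I) ξ * z = 0 → z = 0) {k : ℕ} {r : R}
    (hr : y * r ∈ I ^ (k + 1)) : r ∈ I ^ k := by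
  induction k with
  | zero => simp
  | succ k ih =>
    have r_mem : r ∈ I ^ k := ih (Ideal.pow_le_pow_right (k + 1).le_succ hr)
    let ρ : reesAlgebra I := ⟨monomial k r, reesAlgebra.monomial_mem.2 r_mem⟩
    obtain ⟨f, hf, coe_f⟩ := exists_mem_grIdeal_coe_eq_monomial hr
    have ξ_mul_ρ : ξ * ρ = f := Subtype.ext <| by
      simp [ρ, hξ, coe_f, mul_assoc, X_mul_monomial, C_mul_monomial]
    have ρ_mem : ρ ∈ grIdeal I := by
      refine Ideal.Quotient.eq_zero_iff_mem.1 (hreg _ ?_)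
      rwa [← map_mul, ξ_mul_ρ, Ideal.Quotient.eq_zero_iff_mem]
    simpa [ρ] using coeff_mem_pow_succ_of_mem_grIdeal ρ_mem k

theorem span_singleton_inf_pow_succ_le (hξ : (ξ : R[X]) = C y * X)
    (hreg : ∀ z : GrRing I, Ideal.Quotient.mk (grIdeal I) ξ * z = 0 → z = 0) (k : ℕ) :
    Ideal.span {y} ⊓ I ^ (k + 1) ≤ Ideal.span {y} * I ^ k := by
  rintro x ⟨hx, hxI⟩
  obtain ⟨r, rfl⟩ := Ideal.mem_span_singleton.1 hx
  exact Ideal.mul_mem_mul (Ideal.mem_span_singleton_self y)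
    (mem_pow_of_mul_mem_pow_succ hξ hreg hxI)

end AssociatedGraded

theorem statement19_general {R : Type*} [CommRing R]
    (I : Ideal R) (y : R) (hy : y ∈ I)
    (hann : (⊥ : Ideal R).colon (Ideal.span {y}) ⊓ I = ⊥) :
    (∀ p, 2 ≤ p →
      Ideal.span {y} ⊓ I ^ (p - 1) = Ideal.span {y} * I ^ (p - 2) →
      letI : Module R (EffRel (R ⧸ Ideal.span {y})
          (Ideal.map (Ideal.Quotient.mk (Ideal.span {y})) I) (p - 1)) :=
        Module.compHom _ (Ideal.Quotient.mk (Ideal.span {y}))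
      ∃ (f : EffRel R I (p - 1) →ₗ[R]
            EffRel (R ⧸ Ideal.span {y}) (Ideal.map (Ideal.Quotient.mk (Ideal.span {y})) I) (p - 1))
        (g : EffRel (R ⧸ Ideal.span {y}) (Ideal.map (Ideal.Quotient.mk (Ideal.span {y})) I) (p - 1)
            →ₗ[R] (vvCap y I p ⧸
              Submodule.comap (vvCap y I p).subtype
                (Ideal.span {y} * I ^ (p - 1)))),
        Function.Injective f ∧ Function.Surjective g ∧ Function.Exact f g) ∧
    (∀ ξ : reesAlgebra I, (ξ : Polynomial R) = Polynomial.C y * Polynomial.X →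
      (∀ z : GrRing I, Ideal.Quotient.mk (grIdeal I) ξ * z = 0 → z = 0) →
      (∀ p, 2 ≤ p →
        letI : Module R (EffRel (R ⧸ Ideal.span {y})
            (Ideal.map (Ideal.Quotient.mk (Ideal.span {y})) I) (p - 1)) :=
          Module.compHom _ (Ideal.Quotient.mk (Ideal.span {y}))
        Nonempty (EffRel R I (p - 1) ≃ₗ[R]
          EffRel (R ⧸ Ideal.span {y}) (Ideal.map (Ideal.Quotient.mk (Ideal.span {y})) I) (p - 1))) ∧
      {N : ℕ | 1 ≤ N ∧ ∀ k, N + 1 ≤ k → Subsingleton (EffRel R I (k - 1))}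
        = {N : ℕ | 1 ≤ N ∧ ∀ k, N + 1 ≤ k →
            Subsingleton (EffRel (R ⧸ Ideal.span {y})
              (Ideal.map (Ideal.Quotient.mk (Ideal.span {y})) I) (k - 1))}) := by
  have regular_on_I : ∀ r ∈ I, y * r = 0 → r = 0 := fun r =>
    eq_zero_of_mul_eq_zero_of_colon_inf_eq_bot hann
  refine ⟨fun p hp hVV => ?_, fun ξ hξ hreg => ?_⟩
  · obtain ⟨m, rfl⟩ := Nat.exists_eq_add_of_le' hp
    obtain ⟨g, hg, exact_map_g⟩ :=
      EffRel.exists_exact_map_quotient ((Ideal.span_singleton_le_iff_mem I).2 hy) hVV.le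
    rw [compHom_quotientMk_eq]
    exact ⟨_, g, EffRel.map_quotient_span_singleton_injective hy regular_on_I hVV.le, hg,
      exact_map_g⟩
  · have equiv (p : ℕ) (hp : 2 ≤ p) : Nonempty (EffRel R I (p - 1) ≃ₗ[R]
        EffRel _ (I.map (algebraMap R (R ⧸ Ideal.span {y}))) (p - 1)) := by
      obtain ⟨m, rfl⟩ := Nat.exists_eq_add_of_le' hp
      exact EffRel.nonempty_linearEquiv_quotient_span_singleton hy regular_on_I
        (span_singleton_inf_pow_succ_le hξ hreg m) (span_singleton_inf_pow_succ_le hξ hreg (m + 1))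
    refine ⟨fun p hp => ?_, Set.ext fun N => and_congr_right fun hN => forall₂_congr fun k hk => ?_⟩
    · rw [compHom_quotientMk_eq]
      exact equiv p hp
    · obtain ⟨e⟩ := equiv k (by lia)
      exact e.toEquiv.subsingleton_congr

/-- Let `R` be Noetherian, `y ∈ I \ I²` with `(0 : y) ∩ I = 0`.  If the
Valabrega–Valla module `VV_{(y)}(I)_{p-1} = ((y) ∩ Iᵖ⁻¹)/(yIᵖ⁻²)` vanishes for some
`p ≥ 2`, then there is a short exact sequence of `R`-modules
`0 → E(I)_p → E(I/(y))_p → ((y) ∩ Iᵖ)/(yIᵖ⁻¹) → 0`.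
In particular, if the initial form `y*` is `gr_I(R)`-regular, then
`E(I)_p ≅ E(I/(y))_p` for all `p ≥ 2` and `rt(I) = rt(I/(y))`
(here `EffRel R I (p-1) = E(I)_p`, and the relation type is encoded through the
set of `N ≥ 1` such that `E(I)_k = 0` for all `k ≥ N + 1`). -/
theorem statement19 {R : Type*} [CommRing R] [IsNoetherianRing R]
    (I : Ideal R) (y : R) (hy : y ∈ I) (hy2 : y ∉ I ^ 2)
    (hann : (⊥ : Ideal R).colon (Ideal.span {y}) ⊓ I = ⊥) :
    (∀ p, 2 ≤ p →
      Ideal.span {y} ⊓ I ^ (p - 1) = Ideal.span {y} * I ^ (p - 2) →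
      letI : Module R (EffRel (R ⧸ Ideal.span {y})
          (Ideal.map (Ideal.Quotient.mk (Ideal.span {y})) I) (p - 1)) :=
        Module.compHom _ (Ideal.Quotient.mk (Ideal.span {y}))
      ∃ (f : EffRel R I (p - 1) →ₗ[R]
            EffRel (R ⧸ Ideal.span {y}) (Ideal.map (Ideal.Quotient.mk (Ideal.span {y})) I) (p - 1))
        (g : EffRel (R ⧸ Ideal.span {y}) (Ideal.map (Ideal.Quotient.mk (Ideal.span {y})) I) (p - 1)
            →ₗ[R] (vvCap y I p ⧸
              Submodule.comap (vvCap y I p).subtype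
                (Ideal.span {y} * I ^ (p - 1)))),
        Function.Injective f ∧ Function.Surjective g ∧ Function.Exact f g) ∧
    (∀ ξ : reesAlgebra I, (ξ : Polynomial R) = Polynomial.C y * Polynomial.X →
      (∀ z : GrRing I, Ideal.Quotient.mk (grIdeal I) ξ * z = 0 → z = 0) →
      (∀ p, 2 ≤ p →
        letI : Module R (EffRel (R ⧸ Ideal.span {y})
            (Ideal.map (Ideal.Quotient.mk (Ideal.span {y})) I) (p - 1)) :=
          Module.compHom _ (Ideal.Quotient.mk (Ideal.span {y}))
        Nonempty (EffRel R I (p - 1) ≃ₗ[R]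
          EffRel (R ⧸ Ideal.span {y}) (Ideal.map (Ideal.Quotient.mk (Ideal.span {y})) I) (p - 1))) ∧
      {N : ℕ | 1 ≤ N ∧ ∀ k, N + 1 ≤ k → Subsingleton (EffRel R I (k - 1))}
        = {N : ℕ | 1 ≤ N ∧ ∀ k, N + 1 ≤ k →
            Subsingleton (EffRel (R ⧸ Ideal.span {y})
              (Ideal.map (Ideal.Quotient.mk (Ideal.span {y})) I) (k - 1))}) :=
  statement19_general I y hy hann
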